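/- For all positive integers α, m, n, r, the polynomial ∑_{k=0}^{n-1} (-1)^k · [k(k+1)]_{q²}^r · [2k+1]_q · q^{(n-1-k)(2αm+1)} · w_k^{(α)}(x;q²)^m is divisible by ∏_{d|n, d>1 odd} Φ_d(q) · ∏_{d|n, d>1 even} Φ_d(q²). -/

import Mathlib

open Polynomial LaurentPolynomial

/-- The Gaussian binomial coefficient as a polynomial in `q` over `ℤ`. -/
noncomputable def qbinom : ℕ → ℕ → Polynomial ℤ
  | _, 0 => 1
  | 0, _ + 1 => 0
  | n + 1, k + 1 => qbinom n k + Polynomial.X ^ (k + 1) * qbinom n (k + 1)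

/-- The `q`-integer `[m] = 1 + q + ⋯ + q^{m-1}` in `ℤ[q]`. -/
noncomputable def qint (m : ℕ) : Polynomial ℤ := ∑ i ∈ Finset.range m, Polynomial.X ^ i

/-- The `q`-integer `[m]` as a Laurent polynomial in `q`. -/
noncomputable def qintL (m : ℕ) : LaurentPolynomial ℤ := (qint m).toLaurent

/-- `qbinom(k-1,j-1)·qbinom(k+j,j) − qbinom(k,j)·qbinom(k+j,j-1)`. -/
noncomputable def qwCoeff (k j : ℕ) : Polynomial ℤ :=
  qbinom (k - 1) (j - 1) * qbinom (k + j) j - qbinom k j * qbinom (k + j) (j - 1)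

/-- `w_k^{(α)}(x;q) = ∑_{j=1}^{k} q^{α(C(j+1,2)−(k+1)(j−1))} ·
(qbinom(k-1,j-1)·qbinom(k+j,j) − qbinom(k,j)·qbinom(k+j,j-1))^α · x^{j-1}`,
a polynomial in `x` with coefficients in `ℤ[q,q⁻¹]` (the exponent of `q` may be negative). -/
noncomputable def qw (α k : ℕ) : Polynomial (LaurentPolynomial ℤ) :=
  ∑ j ∈ Finset.Icc 1 k,
    Polynomial.C (LaurentPolynomial.T ((α : ℤ) * (((j + 1).choose 2 : ℤ) - ((k : ℤ) + 1) * ((j : ℤ) - 1))) *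
        ((qwCoeff k j).toLaurent) ^ α) *
      Polynomial.X ^ (j - 1)

/-- `[m]_{q²}`, the `q`-integer `[m]` with `q` replaced by `q²`. -/
noncomputable def qintL2 (m : ℕ) : LaurentPolynomial ℤ :=
  ((qint m).comp (Polynomial.X ^ 2)).toLaurent

/-- `w_k^{(α)}(x;q²)`: the polynomial `w_k^{(α)}(x;q)` with `q` replaced by `q²`. -/
noncomputable def qw2 (α k : ℕ) : Polynomial (LaurentPolynomial ℤ) :=
  ∑ j ∈ Finset.Icc 1 k,
    Polynomial.C (LaurentPolynomial.T
          (2 * ((α : ℤ) * (((j + 1).choose 2 : ℤ) - ((k : ℤ) + 1) * ((j : ℤ) - 1)))) *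
        (((qwCoeff k j).comp (Polynomial.X ^ 2)).toLaurent) ^ α) *
      Polynomial.X ^ (j - 1)

/-! Let `Q` be a primitive `d`-th root of unity. By the `q`-Lucas theorem and upper negation
`[-m-1, s] ↔ [m + s, s]`, the quantity `Q ^ (-k * j) * qwCoeff k j` is unchanged when `k` is
replaced by its mirror image `k'` in its block of `d` consecutive integers, where
`k + k' + 1 = (2 * a + 1) * d`. With `Q = q ^ 2` this makes `q ^ (-2 * α * k) * w_k(x; q²)` and
`[k(k+1)]_{q²}` mirror symmetric, while `(-1) ^ k * q ^ (-k) * [2k+1]_q` is antisymmetric as soon as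
`(-q) ^ d = -1`. Hence for `d ∣ n` the sum vanishes at every `q` such that `-q` is a primitive
`2d`-th root of unity, i.e. at the roots of `Φ_d(q)` for `d` odd and of `Φ_d(q²) = Φ_{2d}(q)` for
`d` even. As distinct cyclotomic polynomials are coprime over `ℚ`, their product divides the sum. -/

section GaussianBinomial

lemma qbinom_eq_zero_of_lt {n k : ℕ} (h : n < k) : qbinom n k = 0 := by
  induction n generalizing k with
  | zero => obtain ⟨k, rfl⟩ := Nat.exists_eq_add_one.mpr h; rw [qbinom]
  | succ n ih =>
    obtain ⟨k, rfl⟩ := Nat.exists_eq_add_one.mpr (Nat.zero_lt_of_lt h)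
    rw [qbinom, ih (by omega), ih (by omega), mul_zero, add_zero]

variable {R : Type*} [CommRing R] {Q : R}

/-- The Gaussian binomial coefficient with `Q` substituted for the indeterminate. -/
noncomputable def gaussBinom (Q : R) (n k : ℕ) : R := aeval Q (qbinom n k)

@[simp] lemma gaussBinom_zero_right (n : ℕ) : gaussBinom Q n 0 = 1 := by
  cases n <;> simp [gaussBinom, qbinom]

@[simp] lemma gaussBinom_zero_succ (k : ℕ) : gaussBinom Q 0 (k + 1) = 0 := by
  simp [gaussBinom, qbinom]

lemma gaussBinom_succ_succ (n k : ℕ) : gaussBinom Q (n + 1) (k + 1) =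
    gaussBinom Q n k + Q ^ (k + 1) * gaussBinom Q n (k + 1) := by
  simp [gaussBinom, qbinom]

lemma gaussBinom_eq_zero_of_lt {n k : ℕ} (h : n < k) : gaussBinom Q n k = 0 := by
  rw [gaussBinom, qbinom_eq_zero_of_lt h, map_zero]

@[simp] lemma gaussBinom_self (n : ℕ) : gaussBinom Q n n = 1 := by
  induction n with
  | zero => simp
  | succ n ih => simp [gaussBinom_succ_succ, ih, gaussBinom_eq_zero_of_lt n.lt_succ_self]

lemma one_sub_pow_mul_gaussBinom_add (n k : ℕ) :
    (1 - Q ^ (k + 1)) * gaussBinom Q (n + k) (k + 1) = (1 - Q ^ n) * gaussBinom Q (n + k) k := by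
  induction n generalizing k with
  | zero => simp [gaussBinom_eq_zero_of_lt k.lt_succ_self]
  | succ n ih =>
    induction k with
    | zero =>
      have h := ih 0
      simp only [add_zero, zero_add, gaussBinom_zero_right, gaussBinom_succ_succ] at h ⊢
      linear_combination Q * h
    | succ k ihk =>
      have h := ih (k + 1)
      rw [show n + 1 + k = n + (k + 1) by ring] at ihk
      rw [show n + 1 + (k + 1) = n + (k + 1) + 1 by ring, gaussBinom_succ_succ,
        gaussBinom_succ_succ _ k]
      linear_combination Q ^ (k + 2) * h + ihk

lemma one_sub_pow_mul_gaussBinom_succ (n k : ℕ) :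
    (1 - Q ^ (k + 1)) * gaussBinom Q (n + 1) (k + 1) = (1 - Q ^ (n + 1)) * gaussBinom Q n k := by
  rw [gaussBinom_succ_succ]
  rcases lt_or_ge n k with h | h
  · simp [gaussBinom_eq_zero_of_lt h, gaussBinom_eq_zero_of_lt (h.trans k.lt_succ_self)]
  · obtain ⟨m, rfl⟩ := Nat.exists_eq_add_of_le' h
    linear_combination Q ^ (k + 1) * one_sub_pow_mul_gaussBinom_add (Q := Q) m k

lemma one_sub_pow_mul_pow_mul_gaussBinom (n k : ℕ) :
    (1 - Q ^ (k + 1)) * (Q ^ k * gaussBinom Q n (k + 1)) = (Q ^ k - Q ^ n) * gaussBinom Q n k := by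
  rcases lt_or_ge n k with h | h
  · simp [gaussBinom_eq_zero_of_lt h, gaussBinom_eq_zero_of_lt (h.trans k.lt_succ_self)]
  · obtain ⟨m, rfl⟩ := Nat.exists_eq_add_of_le' h
    linear_combination Q ^ k * one_sub_pow_mul_gaussBinom_add (Q := Q) m k

end GaussianBinomial

section NarayanaCoefficient

lemma qwCoeff_eq_zero_of_lt {k j : ℕ} (hk : 0 < k) (h : k < j) : qwCoeff k j = 0 := by
  rw [qwCoeff, qbinom_eq_zero_of_lt (by omega), qbinom_eq_zero_of_lt h, zero_mul, zero_mul,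
    sub_zero]

variable {R : Type*} [CommRing R] {Q : R}

/-- The coefficient `qwCoeff k j` of `w_k` with `Q` substituted for the indeterminate. -/
noncomputable def qwCoeffAt (Q : R) (k j : ℕ) : R := aeval Q (qwCoeff k j)

lemma qwCoeffAt_succ_succ (k j : ℕ) : qwCoeffAt Q (k + 1) (j + 1) =
    gaussBinom Q k j * gaussBinom Q (k + j + 2) (j + 1) -
      gaussBinom Q (k + 1) (j + 1) * gaussBinom Q (k + j + 2) j := by
  simp [qwCoeffAt, qwCoeff, gaussBinom, show k + 1 + (j + 1) = k + j + 2 by ring]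

lemma one_sub_pow_mul_qwCoeffAt (k j : ℕ) : (1 - Q ^ (j + 1)) * qwCoeffAt Q (k + 1) (j + 1) =
    Q ^ (k + 1) * (1 - Q) * (gaussBinom Q k j * gaussBinom Q (k + j + 2) j) := by
  have h := one_sub_pow_mul_gaussBinom_add (Q := Q) (k + 2) j
  rw [show k + 2 + j = k + j + 2 by ring] at h
  rw [qwCoeffAt_succ_succ]
  linear_combination gaussBinom Q k j * h -
    gaussBinom Q (k + j + 2) j * one_sub_pow_mul_gaussBinom_succ (Q := Q) k j

end NarayanaCoefficient

section RootOfUnity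

variable {R : Type*} [CommRing R] {Q : R} {d : ℕ}

lemma one_sub_pow_ne_zero (hQ : IsPrimitiveRoot Q d) {i : ℕ} (hi : 0 < i) (hid : i < d) :
    1 - Q ^ i ≠ 0 :=
  sub_ne_zero.mpr (hQ.pow_ne_one_of_pos_of_lt hi.ne' hid).symm

variable [IsDomain R]

lemma gaussBinom_order_eq_zero (hQ : IsPrimitiveRoot Q d) {i : ℕ} (hi : 0 < i) (hid : i < d) :
    gaussBinom Q d i = 0 := by
  obtain ⟨i, rfl⟩ := Nat.exists_eq_add_one.mpr hi
  obtain ⟨e, rfl⟩ := Nat.exists_eq_add_one.mpr (hi.trans hid)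
  have h := one_sub_pow_mul_gaussBinom_succ (Q := Q) e i
  rw [hQ.pow_eq_one, sub_self, zero_mul] at h
  exact (mul_eq_zero.mp h).resolve_left (one_sub_pow_ne_zero hQ hi hid)

lemma gaussBinom_add_order_of_lt (hQ : IsPrimitiveRoot Q d) (n : ℕ) {j : ℕ} (hj : j < d) :
    gaussBinom Q (n + d) j = gaussBinom Q n j := by
  induction n generalizing j with
  | zero =>
    rcases j.eq_zero_or_pos with rfl | h
    · simp
    · rw [zero_add, gaussBinom_order_eq_zero hQ h hj, gaussBinom_eq_zero_of_lt h]
  | succ n ih =>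
    cases j with
    | zero => simp
    | succ j =>
      rw [Nat.add_right_comm, gaussBinom_succ_succ, gaussBinom_succ_succ, ih hj, ih (by omega)]

lemma gaussBinom_add_order_add_order (hQ : IsPrimitiveRoot Q d) (hd : 0 < d) (n j : ℕ) :
    gaussBinom Q (n + d) (j + d) = gaussBinom Q n (j + d) + gaussBinom Q n j := by
  induction n generalizing j with
  | zero =>
    cases j with
    | zero => simp [gaussBinom_eq_zero_of_lt hd]
    | succ j => simp [gaussBinom_eq_zero_of_lt (Nat.lt_add_of_pos_left j.succ_pos),
        gaussBinom_eq_zero_of_lt (Nat.add_pos_right (j + 1) hd)]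
  | succ n ih =>
    cases j with
    | zero =>
      obtain ⟨e, rfl⟩ := Nat.exists_eq_add_one.mpr hd
      have h := ih 0
      rw [zero_add] at h ⊢
      rw [Nat.add_right_comm, gaussBinom_succ_succ, gaussBinom_succ_succ n, h,
        gaussBinom_add_order_of_lt hQ n e.lt_succ_self, hQ.pow_eq_one]
      simp only [gaussBinom_zero_right]
      ring
    | succ j =>
      have h := ih (j + 1)
      rw [Nat.add_right_comm j] at h ⊢
      rw [Nat.add_right_comm n, gaussBinom_succ_succ, gaussBinom_succ_succ n (j + d),
        gaussBinom_succ_succ n j, ih j, h, Nat.add_right_comm j d, pow_add, hQ.pow_eq_one]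
      ring

/-- The `q`-Lucas theorem; the range `d ≤ b < d + v` covers the case of a carry, in which both sides
vanish. -/
lemma gaussBinom_lucas (hQ : IsPrimitiveRoot Q d) (a u : ℕ) {b v : ℕ} (hb : b < d + v)
    (hv : v < d) :
    gaussBinom Q (a * d + b) (u * d + v) = (a.choose u : R) * gaussBinom Q b v := by
  induction a generalizing u with
  | zero =>
    cases u with
    | zero => simp
    | succ u =>
      have : b < (u + 1) * d + v := by rw [add_one_mul]; omega
      simp [gaussBinom_eq_zero_of_lt this]
  | succ a ih =>
    rw [show (a + 1) * d + b = a * d + b + d by ring]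
    cases u with
    | zero => simpa [gaussBinom_add_order_of_lt hQ _ hv] using ih 0
    | succ u =>
      have hu : (u + 1) * d + v = u * d + v + d := by ring
      rw [hu, gaussBinom_add_order_add_order hQ (by omega), ← hu, ih, ih, Nat.choose_succ_succ]
      push_cast
      ring

/-- Upper negation: as `d - 1 - m ≡ -m - 1` modulo `d`, this is
`[-m-1, s] = (-1) ^ s * Q ^ (-m * s - C(s+1, 2)) * [m + s, s]`. -/
lemma gaussBinom_upper_negation (hQ : IsPrimitiveRoot Q d) {m m' s : ℕ} (hm : m + m' + 1 = d)
    (hs : s < d) :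
    Q ^ (m * s + (s + 1).choose 2) * gaussBinom Q m' s = (-1) ^ s * gaussBinom Q (m + s) s := by
  induction s with
  | zero => simp
  | succ s ih =>
    apply mul_left_cancel₀ (one_sub_pow_ne_zero hQ (Nat.add_one_pos s) hs)
    have hd : Q ^ m * Q ^ m' * Q = 1 := by rw [← pow_add, ← pow_succ, hm, hQ.pow_eq_one]
    have h := one_sub_pow_mul_pow_mul_gaussBinom (Q := Q) m' s
    have h' := one_sub_pow_mul_gaussBinom_succ (Q := Q) (m + s) s
    have hexp : m * (s + 1) + (s + 1 + 1).choose 2 = m * s + (s + 1).choose 2 + m + s + 1 := by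
      rw [Nat.choose_succ_succ' (s + 1) 1, Nat.choose_one_right]
      ring
    rw [hexp, ← add_assoc m]
    linear_combination Q ^ (m * s + (s + 1).choose 2) * (Q ^ m * Q) * h - (-1) ^ (s + 1) * h' -
      (1 - Q ^ (m + s + 1)) * ih (by omega) -
      Q ^ (m * s + (s + 1).choose 2) * gaussBinom Q m' s * hd

lemma gaussBinom_mul_reflect (hQ : IsPrimitiveRoot Q d) {t t' s : ℕ} (ht : t + t' + 3 = d)
    (hs : s < d) :
    Q ^ (t' * s) * (gaussBinom Q t s * gaussBinom Q (t + s + 2) s) =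
      Q ^ (t * s) * (gaussBinom Q t' s * gaussBinom Q (t' + s + 2) s) := by
  have h := gaussBinom_upper_negation hQ (m := t' + 2) (m' := t) (by omega) hs
  have h' := gaussBinom_upper_negation hQ (m := t + 2) (m' := t') (by omega) hs
  rw [Nat.add_right_comm] at h h'
  apply mul_left_cancel₀ (pow_ne_zero (2 * s + (s + 1).choose 2) (hQ.ne_zero (by omega)))
  apply mul_left_cancel₀ (pow_ne_zero s (neg_ne_zero.mpr (one_ne_zero (α := R))))
  linear_combination (-1) ^ s * gaussBinom Q (t + s + 2) s * h -
    (-1) ^ s * gaussBinom Q (t' + s + 2) s * h'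

lemma qwCoeffAt_reflect_of_lt (hQ : IsPrimitiveRoot Q d) {b b' v : ℕ} (hb : 0 < b) (hb' : 0 < b')
    (hbb : b + b' + 1 = d) (hv : 0 < v) (hvd : v < d) :
    Q ^ (b' * v) * qwCoeffAt Q b v = Q ^ (b * v) * qwCoeffAt Q b' v := by
  obtain ⟨t, rfl⟩ := Nat.exists_eq_add_one.mpr hb
  obtain ⟨t', rfl⟩ := Nat.exists_eq_add_one.mpr hb'
  obtain ⟨s, rfl⟩ := Nat.exists_eq_add_one.mpr hv
  apply mul_left_cancel₀ (one_sub_pow_ne_zero hQ hv hvd)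
  have h := gaussBinom_mul_reflect hQ (t := t) (t' := t') (s := s) (by omega) (by omega)
  linear_combination Q ^ ((t' + 1) * (s + 1)) * one_sub_pow_mul_qwCoeffAt (Q := Q) t s -
    Q ^ ((t + 1) * (s + 1)) * one_sub_pow_mul_qwCoeffAt (Q := Q) t' s +
    Q ^ (t + t' + s + 2) * (1 - Q) * h

lemma qwCoeffAt_lucas (hQ : IsPrimitiveRoot Q d) (a u : ℕ) {b v : ℕ} (hb : 0 < b)
    (hbd : b + 1 < d) (hv : 0 < v) (hvd : v < d) :
    qwCoeffAt Q (a * d + b) (u * d + v) =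
      (a.choose u : R) * ((a + u).choose u : R) * qwCoeffAt Q b v := by
  obtain ⟨t, rfl⟩ := Nat.exists_eq_add_one.mpr hb
  obtain ⟨s, rfl⟩ := Nat.exists_eq_add_one.mpr hv
  rw [← add_assoc, ← add_assoc, qwCoeffAt_succ_succ, qwCoeffAt_succ_succ,
    show a * d + t + (u * d + s) + 2 = (a + u) * d + (t + s + 2) by ring, add_assoc _ t 1,
    add_assoc _ s 1,
    gaussBinom_lucas hQ a u (b := t) (by omega) (by omega),
    gaussBinom_lucas hQ a u (b := t + 1) (by omega) hvd,
    gaussBinom_lucas hQ (a + u) u (v := s) (by omega) (by omega),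
    gaussBinom_lucas hQ (a + u) u (v := s + 1) (by omega) hvd]
  ring

lemma qwCoeffAt_eq_zero_of_dvd (hQ : IsPrimitiveRoot Q d) (a : ℕ) {b j : ℕ} (hb : 0 < b)
    (hbd : b + 1 < d) (hj : 0 < j) (hdj : d ∣ j) : qwCoeffAt Q (a * d + b) j = 0 := by
  obtain ⟨t, rfl⟩ := Nat.exists_eq_add_one.mpr hb
  obtain ⟨e, rfl⟩ := Nat.exists_eq_add_one.mpr (Nat.zero_lt_of_lt hbd)
  obtain ⟨u, rfl⟩ := hdj
  obtain ⟨u, rfl⟩ := Nat.exists_eq_add_one.mpr (Nat.pos_of_mul_pos_left hj)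
  rw [← add_assoc, show (e + 1) * (u + 1) = u * (e + 1) + e + 1 by ring, qwCoeffAt_succ_succ,
    show a * (e + 1) + t + (u * (e + 1) + e) + 2 = (a + u + 1) * (e + 1) + (t + 1) by ring,
    gaussBinom_lucas hQ a u (b := t) (by omega) e.lt_succ_self,
    gaussBinom_lucas hQ _ u (b := t + 1) (by omega) e.lt_succ_self,
    gaussBinom_eq_zero_of_lt (n := t) (by omega), gaussBinom_eq_zero_of_lt (n := t + 1) (by omega)]
  ring

lemma qwCoeffAt_reflect (hQ : IsPrimitiveRoot Q d) (a : ℕ) {b b' j : ℕ} (hb : 0 < b)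
    (hb' : 0 < b') (hbb : b + b' + 1 = d) (hj : 0 < j) :
    Q ^ ((a * d + b') * j) * qwCoeffAt Q (a * d + b) j =
      Q ^ ((a * d + b) * j) * qwCoeffAt Q (a * d + b') j := by
  rcases (j % d).eq_zero_or_pos with hmod | hmod
  · have hdj := Nat.dvd_of_mod_eq_zero hmod
    rw [qwCoeffAt_eq_zero_of_dvd hQ a hb (by omega) hj hdj,
      qwCoeffAt_eq_zero_of_dvd hQ a hb' (by omega) hj hdj, mul_zero, mul_zero]
  · have hlt := Nat.mod_lt j (show 0 < d by omega)
    have hpow (c : ℕ) : Q ^ ((a * d + c) * j) = Q ^ (c * (j % d)) :=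
      pow_eq_pow_of_modEq ((by simp [Nat.ModEq] : a * d + c ≡ c [MOD d]).mul
        (Nat.mod_modEq j d).symm) hQ.pow_eq_one
    have hlucas {c : ℕ} (hc : 0 < c) (hcd : c + 1 < d) :=
      qwCoeffAt_lucas hQ a (j / d) hc hcd hmod hlt
    simp only [Nat.div_add_mod'] at hlucas
    rw [hpow, hpow, hlucas hb (by omega), hlucas hb' (by omega)]
    linear_combination (a.choose (j / d) : R) * ((a + j / d).choose (j / d) : R) *
      qwCoeffAt_reflect_of_lt hQ hb hb' hbb hmod hlt

end RootOfUnity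

section Reflection

lemma mul_succ_modEq_of_dvd {d k k' : ℕ} (h : d ∣ k + k' + 1) :
    k * (k + 1) ≡ k' * (k' + 1) [MOD d] := by
  rw [Nat.modEq_iff_dvd]
  have h : (d : ℤ) ∣ k + k' + 1 := mod_cast h
  convert! h.mul_left ((k' : ℤ) - k) using 1
  push_cast
  ring

lemma geom_sum_eq_of_modEq {R : Type*} [CommRing R] [IsDomain R] {Q : R} {d k k' : ℕ}
    (hQ : Q ^ d = 1) (hQ1 : Q ≠ 1) (h : k ≡ k' [MOD d]) :
    ∑ i ∈ Finset.range k, Q ^ i = ∑ i ∈ Finset.range k', Q ^ i := by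
  apply mul_right_cancel₀ (sub_ne_zero.mpr hQ1)
  rw [geom_sum_mul, geom_sum_mul, pow_eq_pow_of_modEq h hQ]

lemma neg_one_pow_mul_geom_sum_antisymm {R : Type*} [CommRing R] [IsDomain R] {q : R} (hq : q ≠ 1)
    {k k' : ℕ} (h : (-q) ^ (k + k' + 1) = -1) :
    (-1) ^ k * q ^ k' * ∑ i ∈ Finset.range (2 * k + 1), q ^ i +
      (-1) ^ k' * q ^ k * ∑ i ∈ Finset.range (2 * k' + 1), q ^ i = 0 := by
  have hk : (-1 : R) ^ k * (-1) ^ k = 1 := by rw [← mul_pow]; simp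
  have hk' : (-1 : R) ^ k' * (-1) ^ k' = 1 := by rw [← mul_pow]; simp
  have hpow : q ^ (k + k' + 1) = (-1) ^ k * (-1) ^ k' := by
    rw [neg_pow] at h
    linear_combination -(-1) ^ k * (-1) ^ k' * h -
      q ^ (k + k' + 1) * ((-1) ^ k' * (-1) ^ k' * hk + hk')
  have hgeom := geom_sum_mul q (2 * k + 1)
  have hgeom' := geom_sum_mul q (2 * k' + 1)
  apply mul_right_cancel₀ (sub_ne_zero.mpr hq)
  linear_combination (-1) ^ k * q ^ k' * hgeom + (-1) ^ k' * q ^ k * hgeom' +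
    ((-1) ^ k * q ^ k + (-1) ^ k' * q ^ k') * hpow + (-1) ^ k' * q ^ k * hk +
    (-1) ^ k * q ^ k' * hk'

lemma sum_range_mul_eq_zero_of_reflect {M : Type*} [AddCommGroup M] [IsAddTorsionFree M] {d : ℕ}
    {f : ℕ → M} (hf : ∀ a b b', b + b' + 1 = d → f (a * d + b) + f (a * d + b') = 0) (c : ℕ) :
    ∑ k ∈ Finset.range (c * d), f k = 0 := by
  have hblock (a : ℕ) : ∑ b ∈ Finset.range d, f (a * d + b) = 0 := by
    rw [← self_eq_neg, ← add_eq_zero_iff_eq_neg]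
    nth_rw 2 [← Finset.sum_range_reflect]
    rw [← Finset.sum_add_distrib]
    refine Finset.sum_eq_zero fun b hb => hf a _ _ ?_
    rw [Finset.mem_range] at hb
    omega
  induction c with
  | zero => simp
  | succ c ih => rw [add_one_mul, Finset.sum_range_add, ih, hblock, add_zero]

end Reflection

section Evaluation

variable {R : Type*} [CommRing R]

/-- Evaluation of an integral Laurent polynomial at a unit. -/
noncomputable def evalUnit (u : Rˣ) : ℤ[T;T⁻¹] →+* R :=
  LaurentPolynomial.eval₂ (Int.castRingHom R) u

variable {u : Rˣ}

@[simp] lemma evalUnit_T (z : ℤ) : evalUnit u (T z) = (u ^ z : Rˣ) :=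
  LaurentPolynomial.eval₂_T _ _ z

@[simp] lemma evalUnit_toLaurent (p : ℤ[X]) : evalUnit u (toLaurent p) = aeval (u : R) p :=
  LaurentPolynomial.eval₂_toLaurent _ _ p

@[simp] lemma evalUnit_qintL (k : ℕ) :
    evalUnit u (qintL k) = ∑ i ∈ Finset.range k, (u : R) ^ i := by
  simp [qintL, qint]

@[simp] lemma evalUnit_qintL2 (k : ℕ) :
    evalUnit u (qintL2 k) = ∑ i ∈ Finset.range k, ((u : R) ^ 2) ^ i := by
  rw [qintL2, evalUnit_toLaurent, qint, aeval_comp]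
  simp

lemma coeff_qw2 {α k : ℕ} (hα : α ≠ 0) (hk : 0 < k) (i : ℕ) :
    (qw2 α k).coeff i = T (2 * (α * (((i + 2).choose 2 : ℤ) - (k + 1) * i))) *
      (toLaurent ((qwCoeff k (i + 1)).comp (X ^ 2))) ^ α := by
  simp only [qw2, finsetSum_coeff, coeff_C_mul_X_pow]
  rw [Finset.sum_eq_single (i + 1)]
  · simp
  · intro j hj hji
    rw [Finset.mem_Icc] at hj
    exact if_neg (by omega)
  · intro hi
    rw [Finset.mem_Icc] at hi
    simp [qwCoeff_eq_zero_of_lt hk (show k < i + 1 by omega), hα]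

lemma coeff_map_qw2 {α k : ℕ} (hα : α ≠ 0) (hk : 0 < k) (i : ℕ) :
    ((qw2 α k).map (evalUnit u)).coeff i =
      (((u ^ 2) ^ (((i + 2).choose 2 : ℤ) - (k + 1) * i) : Rˣ) *
        qwCoeffAt ((u : R) ^ 2) k (i + 1)) ^ α := by
  rw [coeff_map, coeff_qw2 hα hk, map_mul, map_pow, evalUnit_T, evalUnit_toLaurent, aeval_comp,
    mul_pow, ← Units.val_pow_eq_pow_val, ← zpow_natCast (_ ^ _) α, ← zpow_mul, mul_comm (α : ℤ),
    zpow_mul u 2, zpow_ofNat]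
  simp [qwCoeffAt]

lemma map_qw2_reflect [IsDomain R] {d : ℕ} (hu : IsPrimitiveRoot ((u : R) ^ 2) d) {α : ℕ}
    (hα : α ≠ 0) (a : ℕ) {b b' : ℕ} (hb : 0 < b) (hb' : 0 < b') (hbb : b + b' + 1 = d) :
    Polynomial.C (((u : R) ^ 2) ^ (α * (a * d + b'))) * (qw2 α (a * d + b)).map (evalUnit u) =
      Polynomial.C (((u : R) ^ 2) ^ (α * (a * d + b))) *
        (qw2 α (a * d + b')).map (evalUnit u) := by
  have hweight (i k k' : ℕ) : ((u : R) ^ 2) ^ k' *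
      ((u ^ 2) ^ (((i + 2).choose 2 : ℤ) - (k + 1) * i) : Rˣ) =
      ((u ^ 2) ^ (((i + 2).choose 2 : ℤ) - (k + k' + 1) * i) : Rˣ) *
        ((u : R) ^ 2) ^ (k' * (i + 1)) := by
    rw [← Units.val_pow_eq_pow_val, ← Units.val_pow_eq_pow_val, ← Units.val_pow_eq_pow_val,
      ← Units.val_mul, ← Units.val_mul, ← zpow_natCast _ k', ← zpow_natCast _ (k' * (i + 1)),
      ← zpow_add, ← zpow_add]
    congr 2
    push_cast
    ring
  ext i
  rw [coeff_C_mul, coeff_C_mul, coeff_map_qw2 hα (by omega), coeff_map_qw2 hα (by omega),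
    mul_comm α, mul_comm α, pow_mul, pow_mul, ← mul_pow, ← mul_pow, ← mul_assoc, ← mul_assoc,
    hweight, hweight, mul_assoc, mul_assoc, qwCoeffAt_reflect hu a hb hb' hbb i.add_one_pos,
    add_comm ((a * d + b : ℕ) : ℤ)]

/-- The `k`-th summand of the alternating sum. -/
noncomputable def altSummand (α m n r k : ℕ) : ℤ[T;T⁻¹][X] :=
  Polynomial.C ((-1 : ℤ[T;T⁻¹]) ^ k * (qintL2 (k * (k + 1))) ^ r * qintL (2 * k + 1) *
    T (((n : ℤ) - 1 - k) * (2 * α * m + 1))) * (qw2 α k) ^ m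

/-- The factor `u ^ ((n-1-k)(2αm+1))` is distributed so that, for `k'` the mirror image of `k`, each
of the four factors on the right is symmetric or antisymmetric in `k` and `k'`. -/
lemma map_altSummand (α m n r k k' : ℕ) : (altSummand α m n r k).map (evalUnit u) =
    Polynomial.C ((u ^ (((n : ℤ) - 1 - (k + k')) * (2 * α * m + 1)) : Rˣ) : R) *
    Polynomial.C ((∑ i ∈ Finset.range (k * (k + 1)), ((u : R) ^ 2) ^ i) ^ r) *
    Polynomial.C ((-1) ^ k * (u : R) ^ k' * ∑ i ∈ Finset.range (2 * k + 1), (u : R) ^ i) *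
    (Polynomial.C (((u : R) ^ 2) ^ (α * k')) * (qw2 α k).map (evalUnit u)) ^ m := by
  have hexp : ((n : ℤ) - 1 - k) * (2 * α * m + 1) =
      (n - 1 - (k + k')) * (2 * α * m + 1) + k' + (2 * (α * k') * m : ℕ) := by
    push_cast
    ring
  simp only [altSummand, Polynomial.map_mul, Polynomial.map_C, Polynomial.map_pow, map_mul, map_pow,
    Polynomial.map_neg, Polynomial.map_one, map_neg, map_one, evalUnit_qintL, evalUnit_qintL2,
    evalUnit_T, hexp, zpow_add, zpow_natCast, Units.val_mul, Units.val_pow_eq_pow_val, mul_pow,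
    ← pow_mul]
  ring

variable [IsDomain R] {d : ℕ}

lemma map_altSummand_eq_zero (hu : IsPrimitiveRoot ((u : R) ^ 2) d) (hd : 1 < d) (α m n : ℕ)
    {r k : ℕ} (hr : r ≠ 0) (hk : d ∣ k * (k + 1)) :
    (altSummand α m n r k).map (evalUnit u) = 0 := by
  have h := geom_sum_eq_of_modEq hu.pow_eq_one (hu.ne_one hd) (Nat.modEq_zero_iff_dvd.mpr hk)
  simp [altSummand, h, hr]

lemma map_altSummand_antisymm (hu : IsPrimitiveRoot ((u : R) ^ 2) d) (hneg : (-u : R) ^ d = -1)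
    (hd : 1 < d) {α r : ℕ} (hα : α ≠ 0) (hr : r ≠ 0) (m n a b b' : ℕ) (hbb : b + b' + 1 = d) :
    (altSummand α m n r (a * d + b)).map (evalUnit u) +
      (altSummand α m n r (a * d + b')).map (evalUnit u) = 0 := by
  have hsum : a * d + b + (a * d + b') + 1 = d * (2 * a + 1) := by rw [← hbb]; ring
  have hmod := mul_succ_modEq_of_dvd (Dvd.intro _ hsum.symm)
  by_cases hdvd : d ∣ (a * d + b) * (a * d + b + 1)
  · rw [map_altSummand_eq_zero hu hd _ _ _ hr hdvd,
      map_altSummand_eq_zero hu hd _ _ _ hr ((hmod.dvd_iff dvd_rfl).mp hdvd), add_zero]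
  have hb : 0 < b := Nat.pos_of_ne_zero fun h => hdvd ⟨a * (a * d + 1), by rw [h]; ring⟩
  have hb' : 0 < b' := Nat.pos_of_ne_zero fun h =>
    hdvd ⟨(a * d + b) * (a + 1), by rw [← hbb, h]; ring⟩
  have hneg' : (-u : R) ^ (a * d + b + (a * d + b') + 1) = -1 := by
    rw [hsum, pow_mul, hneg, Odd.neg_one_pow ⟨a, rfl⟩]
  have hu1 : (u : R) ≠ 1 := fun h => hu.ne_one hd (by rw [h, one_pow])
  rw [map_altSummand α m n r (a * d + b) (a * d + b'),
    map_altSummand α m n r (a * d + b') (a * d + b), map_qw2_reflect hu hα a hb hb' hbb,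
    geom_sum_eq_of_modEq hu.pow_eq_one (hu.ne_one hd) hmod,
    add_comm ((a * d + b : ℕ) : ℤ), ← add_mul, ← mul_add, ← Polynomial.C_add,
    neg_one_pow_mul_geom_sum_antisymm hu1 hneg', Polynomial.C_0, mul_zero, zero_mul]

lemma map_sum_altSummand_eq_zero [CharZero R] (hu : IsPrimitiveRoot ((u : R) ^ 2) d)
    (hneg : (-u : R) ^ d = -1) (hd : 1 < d) {α r n : ℕ} (hα : α ≠ 0) (hr : r ≠ 0) (m : ℕ)
    (hdn : d ∣ n) : (∑ k ∈ Finset.range n, altSummand α m n r k).map (evalUnit u) = 0 := by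
  obtain ⟨c, rfl⟩ := exists_eq_mul_left_of_dvd hdn
  rw [Polynomial.map_sum]
  exact sum_range_mul_eq_zero_of_reflect (map_altSummand_antisymm hu hneg hd hα hr m _) c

end Evaluation

section CyclotomicProduct

lemma prod_cyclotomic_dvd {s : Finset ℕ} {p : ℤ[X]} (h : ∀ e ∈ s, cyclotomic e ℤ ∣ p) :
    ∏ e ∈ s, cyclotomic e ℤ ∣ p := by
  rw [← Polynomial.map_dvd_map (Int.castRingHom ℚ) Int.cast_injective
    (monic_prod_of_monic _ _ fun e _ => cyclotomic.monic e ℤ), Polynomial.map_prod]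
  refine Finset.prod_dvd_of_coprime (fun e _ e' _ hne => ?_)
    fun e he => Polynomial.map_dvd _ (h e he)
  simpa only [Function.onFun, map_cyclotomic] using cyclotomic.isCoprime_rat hne

lemma toLaurent_prod_cyclotomic_dvd {K : Type*} [Field K] [CharZero K] {s : Finset ℕ}
    {f : ℤ[T;T⁻¹]} (h : ∀ e ∈ s, ∃ u : Kˣ, IsPrimitiveRoot (u : K) e ∧ evalUnit u f = 0) :
    toLaurent (∏ e ∈ s, cyclotomic e ℤ) ∣ f := by
  obtain ⟨N, p, hp⟩ := LaurentPolynomial.exists_T_pow f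
  rw [← (LaurentPolynomial.isUnit_T (N : ℤ)).dvd_mul_right, ← hp]
  refine map_dvd toLaurent (prod_cyclotomic_dvd fun e he => ?_)
  obtain ⟨u, hu, huf⟩ := h e he
  rcases e.eq_zero_or_pos with rfl | hpos
  · simp
  rw [cyclotomic_eq_minpoly hu hpos]
  refine minpoly.isIntegrallyClosed_dvd (hu.isIntegral hpos) ?_
  rw [← evalUnit_toLaurent, hp, map_mul, huf, zero_mul]

/-- The order of `-ζ` for `ζ` a primitive `2d`-th root of unity, where `d ≥ 1`. -/
def negOrder (d : ℕ) : ℕ := if Even d then 2 * d else d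

lemma negOrder_of_even {d : ℕ} (hd : Even d) : negOrder d = 2 * d := if_pos hd

lemma negOrder_of_odd {d : ℕ} (hd : Odd d) : negOrder d = d := if_neg (Nat.not_even_iff_odd.mpr hd)

lemma negOrder_ne_zero {d : ℕ} (hd : d ≠ 0) : negOrder d ≠ 0 := by
  unfold negOrder
  split_ifs <;> omega

lemma negOrder_injective : Function.Injective negOrder := by
  intro a b h
  rcases a.even_or_odd with ha | ha <;> rcases b.even_or_odd with hb | hb <;>
    simp only [negOrder_of_even, negOrder_of_odd, ha, hb] at h <;> grind

lemma isPrimitiveRoot_sq_of_negOrder {R : Type*} [CommRing R] {q : R} {d : ℕ} (hd : 0 < d)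
    (hq : IsPrimitiveRoot q (negOrder d)) : IsPrimitiveRoot (q ^ 2) d := by
  rcases d.even_or_odd with h | h
  · rw [negOrder_of_even h] at hq
    exact hq.pow (by omega) rfl
  · rw [negOrder_of_odd h] at hq
    exact hq.pow_of_coprime 2 (Nat.coprime_two_left.mpr h)

lemma neg_pow_eq_neg_one_of_negOrder {R : Type*} [CommRing R] [IsDomain R] {q : R} {d : ℕ}
    (hd : 0 < d) (hq : IsPrimitiveRoot q (negOrder d)) : (-q) ^ d = -1 := by
  rcases d.even_or_odd with h | h
  · rw [negOrder_of_even h] at hq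
    rw [h.neg_pow, (hq.pow (by omega) (mul_comm 2 d)).eq_neg_one_of_two_right]
  · rw [negOrder_of_odd h] at hq
    rw [h.neg_pow, hq.pow_eq_one]

lemma prod_cyclotomic_negOrder (s : Finset ℕ) :
    (∏ d ∈ s with Odd d, cyclotomic d ℤ) * ∏ d ∈ s with Even d, (cyclotomic d ℤ).comp (X ^ 2) =
      ∏ e ∈ s.image negOrder, cyclotomic e ℤ := by
  rw [Finset.prod_image negOrder_injective.injOn, ← Finset.prod_filter_mul_prod_filter_not s Odd]
  congr 1
  · refine Finset.prod_congr rfl fun d hd => ?_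
    rw [negOrder_of_odd (Finset.mem_filter.mp hd).2]
  · simp only [Nat.not_odd_iff_even]
    refine Finset.prod_congr rfl fun d hd => ?_
    have hd := (Finset.mem_filter.mp hd).2
    rw [negOrder_of_even hd, ← expand_eq_comp_X_pow,
      cyclotomic_expand_eq_cyclotomic Nat.prime_two hd.two_dvd, mul_comm]

end CyclotomicProduct

/-- For all positive integers `α, m, n, r`,
`∑_{k=0}^{n-1} (-1)^k [k(k+1)]_{q²}^r [2k+1]_q q^{(n-1-k)(2αm+1)} w_k^{(α)}(x;q²)^m`
is divisible by `∏_{d∣n, d>1 odd} Φ_d(q) · ∏_{d∣n, d>1 even} Φ_d(q²)`. -/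
theorem cyclotomic_prod_dvd_alt_sum (α m n r : ℕ)
    (hα : 1 ≤ α) (hm : 1 ≤ m) (hn : 1 ≤ n) (hr : 1 ≤ r) :
    (Polynomial.C
        (((∏ d ∈ n.divisors.filter (fun d => 1 < d ∧ Odd d), Polynomial.cyclotomic d ℤ) *
            ∏ d ∈ n.divisors.filter (fun d => 1 < d ∧ Even d),
              (Polynomial.cyclotomic d ℤ).comp (Polynomial.X ^ 2)).toLaurent) :
        Polynomial (LaurentPolynomial ℤ)) ∣
      ∑ k ∈ Finset.range n,
        Polynomial.C ((-1 : LaurentPolynomial ℤ) ^ k * (qintL2 (k * (k + 1))) ^ r *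
            qintL (2 * k + 1) *
            LaurentPolynomial.T (((n : ℤ) - 1 - k) * (2 * α * m + 1))) *
          (qw2 α k) ^ m := by
  simp only [← Finset.filter_filter]
  rw [prod_cyclotomic_negOrder, Polynomial.C_dvd_iff_dvd_coeff]
  intro i
  change _ ∣ (∑ k ∈ Finset.range n, altSummand α m n r k).coeff i
  refine toLaurent_prod_cyclotomic_dvd (K := ℂ) fun e he => ?_
  obtain ⟨d, hd, rfl⟩ := Finset.mem_image.mp he
  obtain ⟨hdn, hd1⟩ := Finset.mem_filter.mp hd
  have hpos : 0 < d := by omega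
  have hζ := Complex.isPrimitiveRoot_exp (negOrder d) (negOrder_ne_zero hpos.ne')
  obtain ⟨u, hu⟩ := hζ.isUnit (negOrder_ne_zero hpos.ne')
  rw [← hu] at hζ
  have hsum := map_sum_altSummand_eq_zero (isPrimitiveRoot_sq_of_negOrder hpos hζ)
    (neg_pow_eq_neg_one_of_negOrder hpos hζ) hd1 (Nat.ne_zero_of_lt hα) (Nat.ne_zero_of_lt hr) m
    (Nat.dvd_of_mem_divisors hdn)
  refine ⟨u, hζ, ?_⟩
  rw [← Polynomial.coeff_map, hsum, Polynomial.coeff_zero]
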